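/- The ring R := ℂ[X,Y,Z]/(X² + Y³ + Z⁷) is rigid: it admits no nonzero locally nilpotent derivation, i.e. LND(R) = {0}; equivalently, its Makar-Limanov invariant is all of R. -/

import Mathlib

open MvPolynomial

/-- A derivation of a commutative ring is locally nilpotent if each element is annihilated
by some iterate of the derivation. -/
def IsLND {B : Type u} [CommRing B] (D : Derivation ℤ B B) : Prop :=
  ∀ b : B, ∃ n : ℕ, (⇑D)^[n] b = 0

/-- The Makar-Limanov invariant of a commutative ring: the intersection of the kernels of
all locally nilpotent derivations. -/
def ML (B : Type) [CommRing B] : Set B :=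
  {b : B | ∀ D : Derivation ℤ B B, IsLND D → D b = 0}

/-- `R = ℂ[X,Y,Z]/(X² + Y³ + Z⁷)`. -/
noncomputable abbrev Rring : Type :=
  MvPolynomial (Fin 3) ℂ ⧸ Ideal.span {((X 0) ^ 2 + (X 1) ^ 3 + (X 2) ^ 7 : MvPolynomial (Fin 3) ℂ)}

section Generic

/-- Iterated Leibniz rule. -/
theorem iter_leibniz {B : Type*} [CommRing B] (D : Derivation ℤ B B) (n : ℕ) (a b : B) :
    (⇑D)^[n] (a * b) =
      ∑ ij ∈ Finset.HasAntidiagonal.antidiagonal n, n.choose ij.1 • ((⇑D)^[ij.1] a * (⇑D)^[ij.2] b) := by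
  induction n with
  | zero => simp
  | succ n ih =>
    rw [Finset.sum_antidiagonal_choose_succ_nsmul (fun i j => (⇑D)^[i] a * (⇑D)^[j] b) n,
      Function.iterate_succ_apply', ih, map_sum, ← Finset.sum_add_distrib]
    refine Finset.sum_congr rfl fun ij hij => ?_
    rw [n.choose_symm_of_eq_add (Finset.HasAntidiagonal.mem_antidiagonal.1 hij).symm, map_nsmul,
      Derivation.leibniz, nsmul_add, Function.iterate_succ_apply', Function.iterate_succ_apply',
      smul_eq_mul, smul_eq_mul, mul_comm ((⇑D)^[ij.2] b)]

theorem iter_zero {B : Type*} [CommRing B] (D : Derivation ℤ B B) (n : ℕ) :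
    (⇑D)^[n] 0 = 0 := by
  induction n with
  | zero => rfl
  | succ n ih => rw [Function.iterate_succ_apply, map_zero, ih]

theorem iter_add {B : Type*} [CommRing B] (D : Derivation ℤ B B) (n : ℕ) (a b : B) :
    (⇑D)^[n] (a + b) = (⇑D)^[n] a + (⇑D)^[n] b := by
  induction n generalizing a b with
  | zero => rfl
  | succ n ih => simp only [Function.iterate_succ_apply, map_add, ih]

theorem iter_const_mul {B : Type*} [CommRing B] (D : Derivation ℤ B B) (n : ℕ) (a b : B)
    (ha : D a = 0) : (⇑D)^[n] (a * b) = a * (⇑D)^[n] b := by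
  induction n generalizing b with
  | zero => rfl
  | succ n ih => simp [Function.iterate_succ_apply, ha, ih]

/-- The exponential map of a locally nilpotent derivation. -/
theorem exists_exp {B : Type*} [CommRing B] [IsDomain B] [CharZero B] (D : Derivation ℤ B B)
    (hD : IsLND D) : ∃ φ : B →+* Polynomial (FractionRing B),
      ∀ b n, (φ b).coeff n = algebraMap B (FractionRing B) ((⇑D)^[n] b) / (n.factorial : FractionRing B) := by
  have : CharZero (FractionRing B) :=
    charZero_of_injective_algebraMap (IsFractionRing.injective B (FractionRing B))
  have key : ∀ b, ∃ p : Polynomial (FractionRing B),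
      ∀ n, p.coeff n = algebraMap B (FractionRing B) ((⇑D)^[n] b) / (n.factorial : FractionRing B) := by
    intro b
    obtain ⟨N, hN⟩ := hD b
    refine ⟨∑ i ∈ Finset.range N, Polynomial.monomial i
      (algebraMap B (FractionRing B) ((⇑D)^[i] b) / (i.factorial : FractionRing B)), fun n => ?_⟩
    rw [Polynomial.finsetSum_coeff]
    simp only [Polynomial.coeff_monomial, Finset.sum_ite_eq', Finset.mem_range]
    split_ifs with h
    · rfl
    · obtain ⟨k, rfl⟩ := Nat.exists_eq_add_of_le (not_lt.1 h)
      rw [add_comm, Function.iterate_add_apply, hN, iter_zero]; simp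
  choose f hf using key
  refine ⟨{ toFun := f, map_one' := ?_, map_mul' := ?_, map_zero' := ?_, map_add' := ?_ }, hf⟩
  · ext n
    rw [hf, Polynomial.coeff_one]
    cases n with
    | zero => simp
    | succ n => simp [Function.iterate_succ_apply, iter_zero]
  · intro a b
    ext n
    rw [hf, Polynomial.coeff_mul, iter_leibniz, map_sum, Finset.sum_div]
    refine Finset.sum_congr rfl fun ij hij => ?_
    rw [hf, hf, map_nsmul, map_mul, nsmul_eq_mul]
    have h := Nat.add_choose_mul_factorial_mul_factorial ij.1 ij.2
    rw [Finset.HasAntidiagonal.mem_antidiagonal] at hij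
    rw [hij, ← Nat.choose_symm_of_eq_add hij.symm] at h
    have h2 : ((n.choose ij.1 : ℕ) : FractionRing B) * (ij.1.factorial : FractionRing B)
      * (ij.2.factorial : FractionRing B) = (n.factorial : FractionRing B) := by exact_mod_cast h
    have h3 : (ij.1.factorial : FractionRing B) ≠ 0 := by exact_mod_cast Nat.factorial_ne_zero _
    have h4 : (ij.2.factorial : FractionRing B) ≠ 0 := by exact_mod_cast Nat.factorial_ne_zero _
    have h5 : (n.factorial : FractionRing B) ≠ 0 := by exact_mod_cast Nat.factorial_ne_zero _
    rw [div_mul_div_comm, div_eq_div_iff h5 (mul_ne_zero h3 h4), ← h2]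
    ring
  · ext n; simp [hf, iter_zero]
  · intro a b
    ext n; simp [hf, iter_add, add_div]

/-- A derivation `D` over a field of constants whose kernel is that field: the ring is
generated by one element. -/
theorem exists_generator {B : Type*} [CommRing B] [Algebra ℂ B] (D : Derivation ℤ B B)
    (hD : IsLND D) (hne : D ≠ 0) (hC : ∀ c : ℂ, D (algebraMap ℂ B c) = 0)
    (hker : ∀ a, D a = 0 → ∃ c : ℂ, a = algebraMap ℂ B c) :
    ∃ r : B, ∀ b, ∃ f : Polynomial ℂ, b = Polynomial.aeval r f := by
  classical
  obtain ⟨b, hb⟩ : ∃ b, D b ≠ 0 := by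
    by_contra! h
    exact hne (Derivation.ext h)
  obtain ⟨s, hs, hs2⟩ : ∃ s, D s ≠ 0 ∧ D (D s) = 0 := by
    have hex := hD b
    obtain ⟨m, hm⟩ : ∃ m, Nat.find hex = m + 2 := by
      rcases hn : Nat.find hex with _ | _ | m
      · have := Nat.find_spec hex
        rw [hn] at this
        simp only [Function.iterate_zero, id] at this
        rw [this, map_zero] at hb
        exact absurd rfl hb
      · have := Nat.find_spec hex
        rw [hn] at this
        exact absurd this hb
      · exact ⟨m, rfl⟩
    refine ⟨(⇑D)^[m] b, ?_, ?_⟩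
    · rw [← Function.iterate_succ_apply' (⇑D)]
      exact Nat.find_min hex (by omega)
    · rw [← Function.iterate_succ_apply' (⇑D), ← Function.iterate_succ_apply' (⇑D)]
      have := Nat.find_spec hex
      rwa [hm] at this
  obtain ⟨c, hc⟩ := hker _ hs2
  have hc0 : c ≠ 0 := by rintro rfl; exact hs (by rw [hc, map_zero])
  set r := algebraMap ℂ B c⁻¹ * s with hr
  have hDr : D r = 1 := by
    rw [hr, Derivation.leibniz, hC, hc, smul_zero, add_zero, smul_eq_mul, ← map_mul,
      inv_mul_cancel₀ hc0, map_one]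
  have hpow : ∀ n : ℕ, (⇑D)^[n] (r ^ n) = (n.factorial : B) := by
    intro n
    induction n with
    | zero => simp
    | succ n ih =>
      rw [Function.iterate_succ_apply, Derivation.leibniz_pow, hDr, smul_eq_mul, mul_one,
        Nat.add_sub_cancel, nsmul_eq_mul, iter_const_mul _ _ _ _ (by simp), ih,
        Nat.factorial_succ]
      push_cast; ring
  refine ⟨r, fun b => ?_⟩
  obtain ⟨n, hn⟩ := hD b
  induction n generalizing b with
  | zero => exact ⟨0, by simpa using hn⟩
  | succ n ih =>
    rw [Function.iterate_succ_apply'] at hn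
    obtain ⟨e, he⟩ := hker _ hn
    have hfac : (n.factorial : ℂ) ≠ 0 := by exact_mod_cast Nat.factorial_ne_zero _
    obtain ⟨f, hf⟩ := ih (b + algebraMap ℂ B (-(e / n.factorial)) * r ^ n) (by
      rw [iter_add, iter_const_mul _ _ _ _ (hC _), hpow, he,
        show (n.factorial : B) = algebraMap ℂ B n.factorial by simp, ← map_mul, ← map_add]
      convert map_zero (algebraMap ℂ B)
      field_simp
      ring)
    refine ⟨f + Polynomial.C (e / n.factorial) * Polynomial.X ^ n, ?_⟩
    rw [map_add, ← hf]
    simp only [map_mul, map_pow, Polynomial.aeval_C, Polynomial.aeval_X, map_neg]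
    ring

theorem not_monogenic {B : Type*} [CommRing B] [Algebra ℂ B] (x : Fin 3 → B)
    (rdecomp : ∀ b : B, ∃ (c : ℂ) (f : Fin 3 → B), b = algebraMap ℂ B c + ∑ i, f i * x i)
    (exists_tangent : ∀ v : Fin 3 → ℂ, ∃ ψ : B →ₐ[ℂ] DualNumber ℂ,
      ∀ i, ψ (x i) = TrivSqZeroExt.inr (v i)) (r : B)
    (h : ∀ b, ∃ f : Polynomial ℂ, b = Polynomial.aeval r f) :
    False := by
  obtain ⟨c, u, hr⟩ := rdecomp r
  have fstr : ∀ (v : Fin 3 → ℂ) (ψ : B →ₐ[ℂ] DualNumber ℂ),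
      (∀ i, ψ (x i) = TrivSqZeroExt.inr (v i)) → (ψ r).fst = c := by
    intro v ψ hψ
    rw [hr]
    simp [hψ, Fin.sum_univ_three, TrivSqZeroExt.algebraMap_eq_inl]
  -- values of elements through a tangent vector
  have val : ∀ (v : Fin 3 → ℂ) (ψ : B →ₐ[ℂ] DualNumber ℂ),
      (∀ i, ψ (x i) = TrivSqZeroExt.inr (v i)) → ∀ f : Polynomial ℂ,
      (ψ (Polynomial.aeval r f)).snd = f.derivative.eval c * (ψ r).snd := by
    intro v ψ hψ f
    have h0 := fstr v ψ hψ
    have hfst : ∀ f : Polynomial ℂ, (ψ (Polynomial.aeval r f)).fst = f.eval c := by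
      intro f
      induction f using Polynomial.induction_on' with
      | add p q hp hq => simp [hp, hq]
      | monomial n a => simp [← h0, Polynomial.aeval_monomial, TrivSqZeroExt.algebraMap_eq_inl]
    induction f using Polynomial.induction_on with
    | C a => simp [TrivSqZeroExt.algebraMap_eq_inl]
    | add p q hp hq => simp only [map_add, TrivSqZeroExt.snd_add, hp, hq, Polynomial.eval_add]; ring
    | monomial n a ih =>
      rw [pow_succ, ← mul_assoc, map_mul, map_mul, DualNumber.snd_mul, ih, hfst,
        Polynomial.derivative_mul (f := Polynomial.C a * Polynomial.X ^ n)]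
      simp only [Polynomial.aeval_X, h0, Polynomial.eval_mul, Polynomial.eval_add,
        Polynomial.eval_X, Polynomial.derivative_X, Polynomial.eval_one]
      ring
  obtain ⟨f, hf⟩ := h (x 1)
  obtain ⟨g, hg⟩ := h (x 2)
  obtain ⟨ψ, hψ⟩ := exists_tangent ![0, 1, 0]
  obtain ⟨χ, hχ⟩ := exists_tangent ![0, 0, 1]
  have e1 := val _ ψ hψ f
  have e2 := val _ ψ hψ g
  have e3 := val _ χ hχ g
  rw [← hf, hψ] at e1
  rw [← hg, hψ] at e2
  rw [← hg, hχ] at e3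
  simp at e1 e2 e3
  rcases e2 with e2 | e2
  · simp [e2] at e3
  · simp [e2] at e1

theorem rigid_generic {B : Type*} [CommRing B] [IsDomain B] [Algebra ℂ B] (x : Fin 3 → B)
    (rrel : x 0 ^ 2 + x 1 ^ 3 + x 2 ^ 7 = 0) (rx_ne : ∀ i, x i ≠ 0)
    (rdecomp : ∀ b : B, ∃ (c : ℂ) (f : Fin 3 → B), b = algebraMap ℂ B c + ∑ i, f i * x i)
    (exists_tangent : ∀ v : Fin 3 → ℂ, ∃ ψ : B →ₐ[ℂ] DualNumber ℂ,
      ∀ i, ψ (x i) = TrivSqZeroExt.inr (v i))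
    (rgen : ∀ b : B, ∃ p : MvPolynomial (Fin 3) ℂ, MvPolynomial.aeval x p = b) (D : Derivation ℤ B B) (hD : IsLND D) : D = 0 := by
  have : CharZero B := charZero_of_injective_algebraMap (algebraMap ℂ B).injective
  by_contra hne
  obtain ⟨φ, hφ⟩ := exists_exp D hD
  have hinj := IsFractionRing.injective B (FractionRing B)
  have : CharZero (FractionRing B) := charZero_of_injective_algebraMap hinj
  have hdeg : ∀ b, (φ b).natDegree = 0 → D b = 0 := by
    intro b hb
    have h1 := hφ b 1
    rw [Polynomial.coeff_eq_zero_of_natDegree_lt (by omega)] at h1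
    apply hinj
    simpa using h1.symm
  have hφinj : ∀ b, φ b = 0 → b = 0 := by
    intro b hb
    have h1 := hφ b 0
    rw [hb] at h1
    apply hinj
    simpa using h1.symm
  have hC : ∀ c : ℂ, D (algebraMap ℂ B c) = 0 := by
    intro c
    by_cases hc : c = 0
    · simp [hc]
    · apply hdeg
      exact Polynomial.natDegree_eq_zero_of_isUnit
        (((IsUnit.mk0 c hc).map (algebraMap ℂ B)).map φ)
  -- a nonzero kernel element vanishing at the origin
  obtain ⟨a, f, ha0, haD, haf⟩ : ∃ (a : B) (f : Fin 3 → B), a ≠ 0 ∧ D a = 0 ∧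
      a = ∑ i, f i * x i := by
    by_contra! hcon
    obtain ⟨r, hr⟩ := exists_generator D hD hne hC (by
      intro a ha
      obtain ⟨c, f, h⟩ := rdecomp a
      refine ⟨c, ?_⟩
      by_contra hac
      refine hcon (a - algebraMap ℂ B c) f (sub_ne_zero.2 hac) (by rw [map_sub, ha, hC, sub_zero]) ?_
      rw [h]; ring)
    exact not_monogenic x rdecomp exists_tangent r hr
  have hunit : IsUnit (φ a) := by
    have : φ a = Polynomial.C (algebraMap B (FractionRing B) a) := by
      ext n
      rw [hφ, Polynomial.coeff_C]
      cases n with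
      | zero => simp
      | succ n => simp [Function.iterate_succ_apply, haD, iter_zero]
    rw [this, Polynomial.isUnit_C]
    exact IsUnit.mk0 _ (fun h => ha0 (hinj (by rw [h, map_zero])))
  have hrel : φ (x 0) ^ 2 + φ (x 1) ^ 3 + φ (x 2) ^ 7 = 0 := by
    rw [← map_pow, ← map_pow, ← map_pow, ← map_add, ← map_add, rrel, map_zero]
  have hx : ∀ i, φ (x i) ≠ 0 := fun i h => rx_ne i (hφinj _ h)
  have hcop : IsCoprime (φ (x 0)) (φ (x 1)) := by
    apply isCoprime_of_prime_dvd (fun h => hx 0 h.1)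
    intro p hp h0 h1
    have h2 : p ∣ φ (x 2) := by
      apply hp.dvd_of_dvd_pow (n := 7)
      have h3 := dvd_add (dvd_pow h0 two_ne_zero) (dvd_pow h1 three_ne_zero)
      exact (dvd_add_right h3).1 (by rw [hrel]; exact dvd_zero p)
    apply hp.not_isUnit
    apply isUnit_of_dvd_unit _ hunit
    rw [haf, map_sum, Fin.sum_univ_three, map_mul, map_mul, map_mul]
    exact dvd_add (dvd_add (h0.mul_left _) (h1.mul_left _)) (h2.mul_left _)
  obtain ⟨d0, d1, d2⟩ := Polynomial.flt_catalan (k := FractionRing B) (p := 2) (q := 3) (r := 7)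
    (by norm_num) (by norm_num) (by norm_num) (by norm_num) (by norm_num)
    (by norm_num) (by norm_num)
    (hx 0) (hx 1) (hx 2) hcop (one_ne_zero) (one_ne_zero) (one_ne_zero)
    (by simpa using hrel)
  have hX : ∀ i, D (x i) = 0 := by
    intro i
    fin_cases i
    · exact hdeg _ d0
    · exact hdeg _ d1
    · exact hdeg _ d2
  apply hne
  ext b
  obtain ⟨p, rfl⟩ := rgen b
  induction p using MvPolynomial.induction_on with
  | C a => simp [MvPolynomial.aeval_C, hC]
  | add p q hp hq => rw [map_add, map_add, hp, hq]; simp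
  | mul_X p i hp => rw [map_mul, Derivation.leibniz, hp, MvPolynomial.aeval_X, hX]; simp

end Generic

theorem no_sqrt (q : MvPolynomial (Fin 2) ℂ) :
    q ^ 2 + ((X 0) ^ 3 + (X 1) ^ 7) ≠ 0 := by
  intro h
  have h1 := congrArg (MvPolynomial.aeval ![(0 : Polynomial ℂ), Polynomial.X]) h
  simp only [map_add, map_pow, aeval_X, map_zero, Matrix.cons_val_zero, Matrix.cons_val_one] at h1
  set p := MvPolynomial.aeval ![(0 : Polynomial ℂ), Polynomial.X] q
  have h2 : p ^ 2 = - Polynomial.X ^ 7 := by linear_combination h1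
  have h3 := congrArg Polynomial.natDegree h2
  rw [Polynomial.natDegree_pow, Polynomial.natDegree_neg, Polynomial.natDegree_X_pow] at h3
  omega

theorem prime_poly :
    Prime ((X 0) ^ 2 + (X 1) ^ 3 + (X 2) ^ 7 : MvPolynomial (Fin 3) ℂ) := by
  rw [← MulEquiv.prime_iff (finSuccEquiv ℂ 2).toMulEquiv]
  have : (finSuccEquiv ℂ 2).toMulEquiv ((X 0) ^ 2 + (X 1) ^ 3 + (X 2) ^ 7) =
      Polynomial.X ^ 2 + Polynomial.C ((X 0) ^ 3 + (X 1) ^ 7) := by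
    change finSuccEquiv ℂ 2 ((X 0) ^ 2 + (X (Fin.succ 0)) ^ 3 + (X (Fin.succ 1)) ^ 7) = _
    rw [map_add, map_add, map_pow, map_pow, map_pow, finSuccEquiv_X_zero, finSuccEquiv_X_succ,
      finSuccEquiv_X_succ]
    simp [add_assoc]
  rw [this]
  apply Irreducible.prime
  have hdeg := Polynomial.natDegree_X_pow_add_C (n := 2)
    (r := ((X 0) ^ 3 + (X 1) ^ 7 : MvPolynomial (Fin 2) ℂ))
  rw [Polynomial.Monic.irreducible_iff_roots_eq_zero_of_degree_le_three
    (Polynomial.monic_X_pow_add_C _ two_ne_zero) hdeg.ge (by omega)]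
  apply Multiset.eq_zero_of_forall_notMem
  intro q hq
  have := Polynomial.isRoot_of_mem_roots hq
  simp only [Polynomial.IsRoot, Polynomial.eval_add, Polynomial.eval_pow, Polynomial.eval_X,
    Polynomial.eval_C] at this
  exact no_sqrt q this

noncomputable def rmk : MvPolynomial (Fin 3) ℂ →ₐ[ℂ] Rring :=
  Ideal.Quotient.mkₐ ℂ _

instance rdomain : IsDomain Rring := by
  have : (Ideal.span {((X 0) ^ 2 + (X 1) ^ 3 + (X 2) ^ 7 : MvPolynomial (Fin 3) ℂ)}).IsPrime :=
    (Ideal.span_singleton_prime prime_poly.ne_zero).2 prime_poly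
  exact Ideal.Quotient.isDomain _

theorem rrel : rmk (X 0) ^ 2 + rmk (X 1) ^ 3 + rmk (X 2) ^ 7 = 0 := by
  rw [← map_pow, ← map_pow, ← map_pow, ← map_add, ← map_add]
  exact Ideal.Quotient.eq_zero_iff_mem.2 (Ideal.subset_span rfl)

/-- Tangent vectors at the origin. -/
theorem exists_tangent (v : Fin 3 → ℂ) : ∃ ψ : Rring →ₐ[ℂ] DualNumber ℂ,
    ∀ i, ψ (rmk (X i)) = TrivSqZeroExt.inr (v i) := by
  have h2 : ∀ (n : ℕ) (a : ℂ), (TrivSqZeroExt.inr a : DualNumber ℂ) ^ (n + 2) = 0 := by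
    intro n a
    rw [pow_add, pow_two, TrivSqZeroExt.inr_mul_inr, mul_zero]
  refine ⟨Ideal.Quotient.liftₐ _
    (MvPolynomial.aeval fun i => (TrivSqZeroExt.inr (v i) : DualNumber ℂ)) ?_, fun i => ?_⟩
  · intro a ha
    obtain ⟨b, rfl⟩ := Ideal.mem_span_singleton'.1 ha
    rw [map_mul]
    simp only [map_add, map_pow, MvPolynomial.aeval_X]
    rw [h2 0, h2 1, h2 5]; simp
  · exact (MvPolynomial.aeval_X _ i)

theorem rx_ne (i : Fin 3) : rmk (X i) ≠ 0 := by
  intro h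
  obtain ⟨ψ, hψ⟩ := exists_tangent 1
  have := hψ i
  rw [h, map_zero] at this
  have := congrArg TrivSqZeroExt.snd this
  simp at this

/-- Each element is a constant plus an element of the maximal ideal at the origin. -/
theorem rdecomp (b : Rring) : ∃ (c : ℂ) (f : Fin 3 → Rring),
    b = algebraMap ℂ Rring c + ∑ i, f i * rmk (X i) := by
  obtain ⟨p, rfl⟩ : ∃ p, rmk p = b := Ideal.Quotient.mk_surjective b
  induction p using MvPolynomial.induction_on with
  | C a => exact ⟨a, 0, by simpa using (rmk.commutes a)⟩
  | add p q hp hq =>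
    obtain ⟨c, f, h⟩ := hp
    obtain ⟨c', f', h'⟩ := hq
    exact ⟨c + c', f + f', by rw [map_add, h, h', map_add]; simp [Fin.sum_univ_three]; ring⟩
  | mul_X p i _ =>
    refine ⟨0, Pi.single i (rmk p), ?_⟩
    rw [map_mul, map_zero, zero_add, Finset.sum_eq_single i]
    · simp
    · intro j _ hj; simp [hj]
    · simp

theorem rgen (b : Rring) : ∃ p : MvPolynomial (Fin 3) ℂ, MvPolynomial.aeval (fun i => rmk (X i)) p = b := by
  obtain ⟨p, rfl⟩ : ∃ p, rmk p = b := Ideal.Quotient.mk_surjective b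
  refine ⟨p, ?_⟩
  rw [← MvPolynomial.comp_aeval_apply]
  simp

theorem rigid (D : Derivation ℤ Rring Rring) (hD : IsLND D) : D = 0 :=
  rigid_generic (fun i => rmk (X i)) rrel rx_ne rdecomp exists_tangent rgen D hD

/-- The ring `R = ℂ[X,Y,Z]/(X² + Y³ + Z⁷)` is rigid: it admits no nonzero locally nilpotent
derivation, i.e. `LND(R) = {0}`; equivalently its Makar-Limanov invariant is all of `R`. -/
theorem stmt17 :
    (∀ D : Derivation ℤ Rring Rring, IsLND D → D = 0) ∧ ML Rring = Set.univ := by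
  refine ⟨rigid, Set.eq_univ_of_forall fun b D hD => ?_⟩
  rw [rigid D hD]; rfl
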